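/- arXiv:2511.07258 — 5 statements merged into one kernel-verified Lean document; each statement's English description precedes it below -/
import Mathlib

section
/- Let s, n be positive natural numbers and let Q : ℝˢ → ℂ^{n×n} be continuous with Q(ω) Hermitian positive definite for every ω ∈ ℝˢ. Then there exists a continuous map L : ℝˢ → ℂ^{n×n} such that L(ω) is invertible and Q(ω) = L(ω)·L(ω)ᴴ for every ω ∈ ℝˢ. -/
open Matrix ComplexOrder

/-!
The factor is the positive square root: it is self-adjoint, so `a = √a * √a = √a * star √a`, and it
is invertible when `a` is. It depends continuously on `a` because the functional calculus is
isometric: uniform polynomial approximation of `√` on `[0, r]` yields approximations of `a ↦ √a` by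
continuous maps, uniform over all positive `a` of norm at most `r`.
-/

theorem sqrt_mul_star_sqrt {A : Type*} [NonUnitalRing A] [StarRing A] [PartialOrder A]
    [StarOrderedRing A] [TopologicalSpace A] [IsSemitopologicalRing A] [T2Space A] [Module ℝ A]
    [IsScalarTower ℝ A A] [SMulCommClass ℝ A A]
    [NonUnitalContinuousFunctionalCalculus ℝ A IsSelfAdjoint] [NonnegSpectrumClass ℝ A]
    {a : A} (ha : 0 ≤ a) :
    CFC.sqrt a * star (CFC.sqrt a) = a := by
  rw [(CFC.sqrt_nonneg a).star_eq, CFC.sqrt_mul_sqrt_self a ha]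

theorem exists_continuous_cholesky_factor_general {X A : Type*} [TopologicalSpace X]
    [NormedRing A] [StarRing A] [ContinuousStar A] [CompleteSpace A] [NormedAlgebra ℝ A]
    [PartialOrder A] [StarOrderedRing A] [NonnegSpectrumClass ℝ A]
    [IsometricContinuousFunctionalCalculus ℝ A IsSelfAdjoint]
    {Q : X → A} (hQcont : Continuous Q) (hQpos : ∀ x, IsStrictlyPositive (Q x)) :
    ∃ L : X → A, Continuous L ∧ ∀ x, IsUnit (L x) ∧ Q x = L x * star (L x) := by
  refine ⟨fun x => CFC.sqrt (Q x), ?_, fun x => ⟨?_, ?_⟩⟩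
  · exact CFC.continuousOn_sqrt.comp_continuous hQcont fun x => (hQpos x).nonneg
  · exact (hQpos x).isUnit_cfcSqrt
  · exact (sqrt_mul_star_sqrt (hQpos x).nonneg).symm

/-- **Statement 10.** A continuous family of Hermitian positive definite matrices admits
a continuous family of invertible factors: `Q(ω) = L(ω)·L(ω)ᴴ` with `L(ω)` invertible. -/
theorem exists_continuous_cholesky_factor
    (s n : ℕ) (hs : 0 < s) (hn : 0 < n)
    (Q : EuclideanSpace ℝ (Fin s) → Matrix (Fin n) (Fin n) ℂ)
    (hQcont : Continuous Q)
    (hQpos : ∀ ω, (Q ω).PosDef) :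
    ∃ L : EuclideanSpace ℝ (Fin s) → Matrix (Fin n) (Fin n) ℂ,
      Continuous L ∧ ∀ ω, IsUnit (L ω) ∧ Q ω = L ω * (L ω)ᴴ := by
  -- The operator norm, which makes the functional calculus isometric, is defined so that its
  -- topology is definitionally the entrywise one.
  open scoped MatrixOrder Matrix.Norms.L2Operator in
  exact exists_continuous_cholesky_factor_general hQcont fun ω => (hQpos ω).isStrictlyPositive
end

section
/- Let s, n be positive natural numbers and let H : ℝˢ → ℂ^{n×n} be continuous with H(ω) Hermitian for every ω ∈ ℝˢ. Then there exist continuous functions λ₁, …, λₙ : ℝˢ → ℝ such that for every ω ∈ ℝˢ, λ₁(ω) ≤ λ₂(ω) ≤ … ≤ λₙ(ω) are exactly the eigenvalues of H(ω) counted with multiplicity, and there exists a unitary matrix U(ω) ∈ ℂ^{n×n} with H(ω) = U(ω)·diag(λ₁(ω), …, λₙ(ω))·U(ω)ᴴ. -/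
open Matrix

/-!
The eigenvalues of a Hermitian matrix, taken in order, are `1`-Lipschitz functions of the matrix in
the operator norm (Weyl's perturbation inequality). Indeed, if `S` and `T` are symmetric operators
on an `n`-dimensional space, the span of the eigenvectors of `S` for its `i + 1` largest eigenvalues
meets the span of those of `T` for its `n - i` smallest ones, for dimension reasons; comparing the
quadratic forms of `S` and `T` at a common nonzero vector gives `λᵢ(S) ≤ λᵢ(T) + ‖S - T‖`.
Continuity of the ordered eigenvalues follows, and the diagonalization is the spectral theorem.
-/

open Module

theorem exists_ne_zero_mem_of_finrank_lt_add {K V : Type*} [DivisionRing K] [AddCommGroup V]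
    [Module K V] [FiniteDimensional K V] {P Q : Submodule K V}
    (h : finrank K V < finrank K P + finrank K Q) : ∃ x ≠ 0, x ∈ P ∧ x ∈ Q := by
  have hPQ : ¬ Disjoint P Q := fun hd ↦
    h.not_ge (Submodule.finrank_add_finrank_le_of_disjoint hd)
  obtain ⟨x, hx, hx0⟩ := Submodule.exists_mem_ne_zero_of_ne_bot (mt disjoint_iff.mpr hPQ)
  exact ⟨x, hx0, hx⟩

theorem finrank_span_image_finset {K V ι : Type*} [DivisionRing K] [AddCommGroup V] [Module K V]
    {v : ι → V} (hv : LinearIndependent K v) (s : Finset ι) :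
    finrank K (Submodule.span K (v '' s)) = s.card := by
  have hs : LinearIndependent K fun i : s ↦ v i := hv.comp _ Subtype.val_injective
  rw [Set.image_eq_range]
  exact (finrank_span_eq_card hs).trans (Fintype.card_coe s)

section RayleighBounds

variable {𝕜 E ι : Type*} [RCLike 𝕜] [NormedAddCommGroup E] [InnerProductSpace 𝕜 E]

theorem inner_eq_zero_of_mem_span_image {v : ι → E} (hv : Orthonormal 𝕜 v) {s : Set ι} {x : E}
    (hx : x ∈ Submodule.span 𝕜 (v '' s)) {i : ι} (hi : i ∉ s) : inner 𝕜 (v i) x = 0 := by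
  induction hx using Submodule.span_induction with
  | mem y hy =>
    obtain ⟨j, hj, rfl⟩ := hy
    exact hv.2 (ne_of_mem_of_not_mem hj hi).symm
  | zero => exact inner_zero_right _
  | add y z _ _ hy hz => rw [inner_add_right, hy, hz, add_zero]
  | smul a y _ hy => rw [inner_smul_right, hy, mul_zero]

variable [Fintype ι] {T : E →ₗ[𝕜] E} {b : OrthonormalBasis ι 𝕜 E} {μ : ι → ℝ}

theorem re_inner_apply_self_eq_sum (hT : ∀ i, T (b i) = (μ i : 𝕜) • b i) (x : E) :
    RCLike.re (inner 𝕜 x (T x)) = ∑ i, μ i * ‖inner 𝕜 (b i) x‖ ^ 2 := by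
  have hTx : T x = ∑ i, inner 𝕜 (b i) x • (μ i : 𝕜) • b i := by
    conv_lhs => rw [← b.sum_repr' x]
    simp only [map_sum, map_smul, hT]
  rw [hTx, inner_sum, map_sum]
  refine Finset.sum_congr rfl fun i _ ↦ ?_
  rw [inner_smul_right, inner_smul_right, mul_left_comm, ← inner_conj_symm x (b i),
    RCLike.mul_conj, RCLike.re_ofReal_mul]
  norm_cast

theorem mul_norm_sq_le_re_inner_apply_self (hT : ∀ i, T (b i) = (μ i : 𝕜) • b i) {s : Set ι} {c : ℝ}
    (hc : ∀ i ∈ s, c ≤ μ i) {x : E} (hx : x ∈ Submodule.span 𝕜 (b '' s)) :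
    c * ‖x‖ ^ 2 ≤ RCLike.re (inner 𝕜 x (T x)) := by
  rw [re_inner_apply_self_eq_sum hT, ← b.sum_sq_norm_inner_right x, Finset.mul_sum]
  refine Finset.sum_le_sum fun i _ ↦ ?_
  by_cases hi : i ∈ s
  · exact mul_le_mul_of_nonneg_right (hc i hi) (sq_nonneg _)
  · simp [inner_eq_zero_of_mem_span_image b.orthonormal hx hi]

theorem re_inner_apply_self_le_mul_norm_sq (hT : ∀ i, T (b i) = (μ i : 𝕜) • b i) {s : Set ι} {c : ℝ}
    (hc : ∀ i ∈ s, μ i ≤ c) {x : E} (hx : x ∈ Submodule.span 𝕜 (b '' s)) :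
    RCLike.re (inner 𝕜 x (T x)) ≤ c * ‖x‖ ^ 2 := by
  have hneg : ∀ i, (-T) (b i) = ((-μ i : ℝ) : 𝕜) • b i := fun i ↦ by simp [hT]
  have h := mul_norm_sq_le_re_inner_apply_self hneg (fun i hi ↦ neg_le_neg (hc i hi)) hx
  rw [LinearMap.neg_apply, inner_neg_right, map_neg, neg_mul] at h
  exact neg_le_neg_iff.mp h

end RayleighBounds

section SymmetricOperators

variable {𝕜 E : Type*} [RCLike 𝕜] [NormedAddCommGroup E] [InnerProductSpace 𝕜 E]
  {S T : E →ₗ[𝕜] E}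

theorem re_inner_apply_le_add_of_norm_sub_le {c : ℝ} {x : E} (h : ‖S x - T x‖ ≤ c * ‖x‖) :
    RCLike.re (inner 𝕜 x (S x)) ≤ RCLike.re (inner 𝕜 x (T x)) + c * ‖x‖ ^ 2 := by
  rw [← sub_le_iff_le_add', ← map_sub, ← inner_sub_right]
  calc RCLike.re (inner 𝕜 x (S x - T x)) ≤ ‖x‖ * ‖S x - T x‖ := re_inner_le_norm _ _
    _ ≤ ‖x‖ * (c * ‖x‖) := by gcongr
    _ = c * ‖x‖ ^ 2 := by ring

variable [FiniteDimensional 𝕜 E] {n : ℕ}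

theorem isSymmetric_eigenvalues_le_add (hS : S.IsSymmetric) (hT : T.IsSymmetric)
    (hn : finrank 𝕜 E = n) {c : ℝ}
    (h : ∀ x, RCLike.re (inner 𝕜 x (S x)) ≤ RCLike.re (inner 𝕜 x (T x)) + c * ‖x‖ ^ 2)
    (i : Fin n) : hS.eigenvalues hn i ≤ hT.eigenvalues hn i + c := by
  let v := hS.eigenvectorBasis hn
  let w := hT.eigenvectorBasis hn
  obtain ⟨x, hx0, hxv, hxw⟩ : ∃ x ≠ 0, x ∈ Submodule.span 𝕜 (v '' (Finset.Iic i : Finset (Fin n))) ∧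
      x ∈ Submodule.span 𝕜 (w '' (Finset.Ici i : Finset (Fin n))) := by
    apply exists_ne_zero_mem_of_finrank_lt_add
    rw [finrank_span_image_finset v.orthonormal.linearIndependent,
      finrank_span_image_finset w.orthonormal.linearIndependent, Fin.card_Iic, Fin.card_Ici, hn]
    lia
  have hlower : hS.eigenvalues hn i * ‖x‖ ^ 2 ≤ RCLike.re (inner 𝕜 x (S x)) :=
    mul_norm_sq_le_re_inner_apply_self (hS.apply_eigenvectorBasis hn)
      (fun j hj ↦ hS.eigenvalues_antitone hn (Finset.mem_Iic.mp hj)) hxv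
  have hupper : RCLike.re (inner 𝕜 x (T x)) ≤ hT.eigenvalues hn i * ‖x‖ ^ 2 :=
    re_inner_apply_self_le_mul_norm_sq (hT.apply_eigenvectorBasis hn)
      (fun j hj ↦ hT.eigenvalues_antitone hn (Finset.mem_Ici.mp hj)) hxw
  refine le_of_mul_le_mul_right ?_ (pow_pos (norm_pos_iff.mpr hx0) 2)
  linarith [h x]

theorem isSymmetric_abs_eigenvalues_sub_le (hS : S.IsSymmetric) (hT : T.IsSymmetric)
    (hn : finrank 𝕜 E = n) {c : ℝ} (h : ∀ x, ‖S x - T x‖ ≤ c * ‖x‖) (i : Fin n) :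
    |hS.eigenvalues hn i - hT.eigenvalues hn i| ≤ c := by
  have hST := isSymmetric_eigenvalues_le_add hS hT hn
    (fun x ↦ re_inner_apply_le_add_of_norm_sub_le (h x)) i
  have hTS := isSymmetric_eigenvalues_le_add hT hS hn
    (fun x ↦ re_inner_apply_le_add_of_norm_sub_le (norm_sub_rev (S x) (T x) ▸ h x)) i
  exact abs_sub_le_iff.mpr ⟨by linarith, by linarith⟩

end SymmetricOperators

section HermitianMatrices

variable {𝕜 m : Type*} [RCLike 𝕜] [Fintype m]

section DecidableEq

variable [DecidableEq m]

open scoped Matrix.Norms.L2Operator in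
theorem isHermitian_abs_eigenvalues_sub_le {A B : Matrix m m 𝕜} (hA : A.IsHermitian)
    (hB : B.IsHermitian) (i : m) : |hA.eigenvalues i - hB.eigenvalues i| ≤ ‖A - B‖ := by
  refine isSymmetric_abs_eigenvalues_sub_le _ _ _ (fun x ↦ ?_) _
  rw [← LinearMap.sub_apply, ← map_sub]
  exact l2_opNorm_mulVec (A - B) x

open scoped Matrix.Norms.L2Operator in
theorem lipschitzWith_isHermitian_eigenvalues (i : m) :
    LipschitzWith 1 fun A : {A : Matrix m m 𝕜 // A.IsHermitian} ↦ A.2.eigenvalues i :=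
  LipschitzWith.of_dist_le_mul fun A B ↦ by
    rw [NNReal.coe_one, one_mul, Real.dist_eq, Subtype.dist_eq, dist_eq_norm]
    exact isHermitian_abs_eigenvalues_sub_le A.2 B.2 i

theorem continuous_isHermitian_eigenvalues {X : Type*} [TopologicalSpace X] {H : X → Matrix m m 𝕜}
    (hH : Continuous H) (hherm : ∀ x, (H x).IsHermitian) (i : m) :
    Continuous fun x ↦ (hherm x).eigenvalues i := by
  open scoped Matrix.Norms.L2Operator in
  exact (lipschitzWith_isHermitian_eigenvalues i).continuous.comp (hH.subtype_mk hherm)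

variable {A : Matrix m m 𝕜} (hA : A.IsHermitian) (σ : Equiv.Perm m)

theorem roots_charpoly_eq_map_eigenvalues_perm :
    A.charpoly.roots =
      (Finset.univ : Finset m).val.map fun i ↦ (hA.eigenvalues (σ i) : 𝕜) := by
  rw [hA.roots_charpoly_eq_eigenvalues]
  conv_lhs => rw [← Multiset.map_univ_val_equiv σ, Multiset.map_map]
  rfl

theorem exists_unitary_eq_mul_diagonal_eigenvalues_perm :
    ∃ U ∈ unitaryGroup m 𝕜, A = U * diagonal (fun i ↦ (hA.eigenvalues (σ i) : 𝕜)) * Uᴴ := by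
  let V : Matrix m m 𝕜 := hA.eigenvectorUnitary
  have hV : V * Vᴴ = 1 := mem_unitaryGroup_iff.mp hA.eigenvectorUnitary.2
  have hA' : A = V * diagonal (RCLike.ofReal ∘ hA.eigenvalues) * Vᴴ := hA.spectral_theorem
  refine ⟨V.submatrix id σ, ?_, ?_⟩
  · rw [mem_unitaryGroup_iff, star_eq_conjTranspose, conjTranspose_submatrix,
      submatrix_mul_equiv, hV, submatrix_id_id]
  · have hdiag : diagonal (fun i ↦ (hA.eigenvalues (σ i) : 𝕜)) =
        (diagonal (RCLike.ofReal ∘ hA.eigenvalues)).submatrix σ σ :=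
      (submatrix_diagonal_equiv (RCLike.ofReal ∘ hA.eigenvalues) σ).symm
    rw [hdiag, conjTranspose_submatrix, submatrix_mul_equiv, submatrix_mul_equiv, ← hA',
      submatrix_id_id]

end DecidableEq

variable [LinearOrder m]

-- `eigenvalues` is the decreasing enumeration `eigenvalues₀` composed with a bijection that depends
-- only on the index type.
variable (𝕜 m) in
theorem exists_perm_forall_monotone_eigenvalues :
    ∃ σ : Equiv.Perm m, ∀ {A : Matrix m m 𝕜} (hA : A.IsHermitian),
      Monotone fun i ↦ hA.eigenvalues (σ i) := by
  let rank : m ≃o Fin (Fintype.card m) := (Fintype.orderIsoFinOfCardEq m rfl).symm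
  let e : Fin (Fintype.card m) ≃ m := Fintype.equivOfCardEq (Fintype.card_fin _)
  refine ⟨(rank.toEquiv.trans Fin.revPerm).trans e, fun {A} hA i j hij ↦ ?_⟩
  have heig : ∀ k, hA.eigenvalues (e (rank k).rev) = hA.eigenvalues₀ (rank k).rev := fun k ↦
    congrArg hA.eigenvalues₀ (e.symm_apply_apply _)
  change hA.eigenvalues (e (rank i).rev) ≤ hA.eigenvalues (e (rank j).rev)
  rw [heig, heig]
  exact hA.eigenvalues₀_antitone (Fin.rev_le_rev.mpr (rank.monotone hij))

theorem exists_continuous_ordered_eigenvalues_general {X : Type*} [TopologicalSpace X]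
    (H : X → Matrix m m 𝕜) (hHcont : Continuous H) (hHherm : ∀ x, (H x).IsHermitian) :
    ∃ lam : m → X → ℝ,
      (∀ i, Continuous (lam i)) ∧
      ∀ x : X,
        (∀ i j : m, i ≤ j → lam i x ≤ lam j x) ∧
        (H x).charpoly.roots = (Finset.univ : Finset m).val.map (fun i ↦ (lam i x : 𝕜)) ∧
        ∃ U : Matrix m m 𝕜, U ∈ unitaryGroup m 𝕜 ∧
          H x = U * diagonal (fun i ↦ (lam i x : 𝕜)) * Uᴴ := by
  obtain ⟨σ, hσ⟩ := exists_perm_forall_monotone_eigenvalues 𝕜 m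
  exact ⟨fun i x ↦ (hHherm x).eigenvalues (σ i),
    fun i ↦ continuous_isHermitian_eigenvalues hHcont hHherm (σ i),
    fun x ↦ ⟨fun _ _ hij ↦ hσ (hHherm x) hij,
      roots_charpoly_eq_map_eigenvalues_perm (hHherm x) σ,
      exists_unitary_eq_mul_diagonal_eigenvalues_perm (hHherm x) σ⟩⟩

end HermitianMatrices

/-- **Statement 11.** A continuous family of Hermitian matrices admits continuous,
pointwise nondecreasing eigenvalue functions `λ₁ ≤ … ≤ λₙ` which are exactly the
eigenvalues counted with multiplicity (the roots of the characteristic polynomial),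
together with a pointwise unitary diagonalization. -/
theorem exists_continuous_ordered_eigenvalues
    (s n : ℕ) (hs : 0 < s) (hn : 0 < n)
    (H : EuclideanSpace ℝ (Fin s) → Matrix (Fin n) (Fin n) ℂ)
    (hHcont : Continuous H)
    (hHherm : ∀ ω, (H ω).IsHermitian) :
    ∃ lam : Fin n → EuclideanSpace ℝ (Fin s) → ℝ,
      (∀ i, Continuous (lam i)) ∧
      ∀ ω : EuclideanSpace ℝ (Fin s),
        (∀ i j : Fin n, i ≤ j → lam i ω ≤ lam j ω) ∧
        (H ω).charpoly.roots =
          (Finset.univ : Finset (Fin n)).val.map (fun i => ((lam i ω : ℝ) : ℂ)) ∧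
        ∃ U : Matrix (Fin n) (Fin n) ℂ, U ∈ Matrix.unitaryGroup (Fin n) ℂ ∧
          H ω = U * Matrix.diagonal (fun i => ((lam i ω : ℝ) : ℂ)) * Uᴴ :=
  exists_continuous_ordered_eigenvalues_general H hHcont hHherm
end

section
/- Let s, n be positive natural numbers. Let Ŝ : ℝˢ → ℂ^{n×n} be continuous with Ŝ(ω) Hermitian and invertible for every ω, and let Q̂ : ℝˢ → ℂ^{n×n} be continuous with Q̂(ω) Hermitian positive definite for every ω. Assume Q̂(ω) = Ŝ(ω)·Q̂(ω)⁻¹·Ŝ(ω) for every ω ∈ ℝˢ. Then there exists a natural number k ≤ n and, for every ω ∈ ℝˢ, an invertible matrix T̂(ω) ∈ ℂ^{n×n}, such that with the constant signature matrix D = diag(I_k, −I_{n−k}) one has Q̂(ω) = T̂(ω)ᴴ·T̂(ω) and Ŝ(ω) = T̂(ω)ᴴ·D·T̂(ω) for every ω ∈ ℝˢ. -/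
open Matrix ComplexOrder

/-- The `n×n` signature matrix `diag(I_k, −I_{n−k})`: the first `k` diagonal entries are
`1` and the remaining ones are `−1`. -/
noncomputable def signatureMatrix (n k : ℕ) : Matrix (Fin n) (Fin n) ℂ :=
  Matrix.diagonal fun i => if (i : ℕ) < k then (1 : ℂ) else -1

/-! The relation `Q = S Q⁻¹ S` says that `S Q⁻¹` is an involution. Writing `Q = Bᴴ B`, it is similar
to `B⁻ᴴ S B⁻¹`, a Hermitian involution, hence unitarily diagonalizable with eigenvalues `±1`;
sorting these gives `k` and `T` at each point. Then `2 k - n` is the trace of `S Q⁻¹`, an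
integer depending continuously on the point, so it is constant on a connected space. -/

theorem exists_perm_apply_iff_val_lt {n : ℕ} (p : Fin n → Prop) :
    ∃ k ≤ n, ∃ e : Equiv.Perm (Fin n), ∀ i, p (e i) ↔ (i : ℕ) < k := by
  classical
  have hk : Fintype.card {i // p i} ≤ n := by
    simpa only [Fintype.card_fin] using Fintype.card_subtype_le p
  let f : {i : Fin n // (i : ℕ) < Fintype.card {i // p i}} ≃ {i // p i} :=
    (Fin.castLEquiv hk).symm.trans (Fintype.equivFin {i // p i}).symm
  exact ⟨_, hk, f.extendSubtype, fun i =>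
    ⟨fun hi => not_imp_not.mp (f.extendSubtype_not_mem i) hi, f.extendSubtype_mem i⟩⟩

theorem trace_signatureMatrix {n k : ℕ} (hk : k ≤ n) :
    (signatureMatrix n k).trace = 2 * (k : ℂ) - n := by
  have sign_eq (i : Fin n) : (if (i : ℕ) < k then (1 : ℂ) else -1) =
      2 * (if (i : ℕ) < k then 1 else 0) - 1 := by
    split_ifs <;> norm_num
  simp only [signatureMatrix, trace_diagonal, sign_eq, Finset.sum_sub_distrib, ← Finset.mul_sum,
    Finset.sum_boole, Fin.card_filter_val_lt, min_eq_right hk, Finset.sum_const,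
    Finset.card_univ, Fintype.card_fin, nsmul_eq_mul, mul_one]

section StarRing

variable {ι R : Type*} [Fintype ι] [DecidableEq ι] [CommRing R] [StarRing R]

theorem trace_conjTranspose_mul_mul_mul_inv {T : Matrix ι ι R} (hT : IsUnit T)
    (D : Matrix ι ι R) : (Tᴴ * D * T * (Tᴴ * T)⁻¹).trace = D.trace := by
  have hdet : IsUnit T.det := (isUnit_iff_isUnit_det T).mp hT
  have hdetH : IsUnit Tᴴ.det := det_conjTranspose T ▸ hdet.star
  calc (Tᴴ * D * T * (Tᴴ * T)⁻¹).trace = (Tᴴ * D * (Tᴴ)⁻¹).trace := by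
        rw [Matrix.mul_inv_rev, ← Matrix.mul_assoc, mul_nonsing_inv_cancel_right _ _ hdet]
    _ = D.trace := by
        rw [trace_mul_comm, nonsing_inv_mul_cancel_left _ _ hdetH]

theorem conjTranspose_inv_mul_mul_inv_mul_self_eq_one {B S : Matrix ι ι R} (hB : IsUnit B)
    (h : Bᴴ * B = S * (Bᴴ * B)⁻¹ * S) :
    ((B⁻¹)ᴴ * S * B⁻¹) * ((B⁻¹)ᴴ * S * B⁻¹) = 1 := by
  have hdet : IsUnit B.det := (isUnit_iff_isUnit_det B).mp hB
  have hdetH : IsUnit Bᴴ.det := det_conjTranspose B ▸ hdet.star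
  calc ((B⁻¹)ᴴ * S * B⁻¹) * ((B⁻¹)ᴴ * S * B⁻¹)
      = (Bᴴ)⁻¹ * (S * (Bᴴ * B)⁻¹ * S) * B⁻¹ := by
        simp only [conjTranspose_nonsing_inv, Matrix.mul_inv_rev, Matrix.mul_assoc]
    _ = (Bᴴ)⁻¹ * (Bᴴ * B) * B⁻¹ := by rw [← h]
    _ = 1 := by rw [nonsing_inv_mul_cancel_left _ _ hdetH, mul_nonsing_inv _ hdet]

end StarRing

theorem eigenvalues_eq_one_or_neg_one {ι 𝕜 : Type*} [Fintype ι] [DecidableEq ι] [RCLike 𝕜]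
    {M : Matrix ι ι 𝕜} (hM : M.IsHermitian) (h : M * M = 1) (i : ι) :
    hM.eigenvalues i = 1 ∨ hM.eigenvalues i = -1 := by
  have hsq : diagonal (RCLike.ofReal ∘ hM.eigenvalues) *
      diagonal (RCLike.ofReal ∘ hM.eigenvalues) = (1 : Matrix ι ι 𝕜) := by
    rwa [hM.spectral_theorem, ← map_mul, EmbeddingLike.map_eq_one_iff] at h
  rw [diagonal_mul_diagonal, diagonal_eq_one] at hsq
  have hi : (hM.eigenvalues i : 𝕜) * hM.eigenvalues i = 1 := congrFun hsq i
  exact mul_self_eq_one_iff.mp (by exact_mod_cast hi)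

theorem exists_unitary_mul_signatureMatrix_mul_conjTranspose {n : ℕ}
    {M : Matrix (Fin n) (Fin n) ℂ} (hM : M.IsHermitian) (h : M * M = 1) :
    ∃ k ≤ n, ∃ W ∈ unitaryGroup (Fin n) ℂ, M = W * signatureMatrix n k * Wᴴ := by
  obtain ⟨k, hk, e, he⟩ := exists_perm_apply_iff_val_lt fun i => hM.eigenvalues i = 1
  have hD : signatureMatrix n k =
      (diagonal (RCLike.ofReal ∘ hM.eigenvalues)).submatrix e e := by
    rw [submatrix_diagonal_equiv, signatureMatrix, diagonal_eq_diagonal_iff]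
    intro i
    split_ifs with hi
    · simp [(he i).mpr hi]
    · simp [(eigenvalues_eq_one_or_neg_one hM h (e i)).resolve_left (mt (he i).mp hi)]
  let U : Matrix (Fin n) (Fin n) ℂ := hM.eigenvectorUnitary
  refine ⟨k, hk, U.submatrix id e, ?_, ?_⟩
  · rw [mem_unitaryGroup_iff, star_eq_conjTranspose, conjTranspose_submatrix,
      submatrix_mul_equiv, submatrix_id_id]
    exact Unitary.coe_mul_star_self hM.eigenvectorUnitary
  · rw [hD, conjTranspose_submatrix, submatrix_mul_equiv, submatrix_mul_equiv, submatrix_id_id]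
    exact hM.spectral_theorem

theorem exists_signature_congruence {n : ℕ} {S Q : Matrix (Fin n) (Fin n) ℂ}
    (hS : S.IsHermitian) (hQ : Q.PosDef) (h : Q = S * Q⁻¹ * S) :
    ∃ k ≤ n, ∃ T : Matrix (Fin n) (Fin n) ℂ,
      IsUnit T ∧ Q = Tᴴ * T ∧ S = Tᴴ * signatureMatrix n k * T := by
  obtain ⟨B, hB, rfl⟩ : ∃ B : Matrix (Fin n) (Fin n) ℂ, IsUnit B ∧ Q = Bᴴ * B := by
    open scoped MatrixOrder in
    exact CStarAlgebra.isStrictlyPositive_iff_eq_star_mul_self.mp hQ.isStrictlyPositive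
  obtain ⟨k, hk, W, hW, hM⟩ := exists_unitary_mul_signatureMatrix_mul_conjTranspose
    (isHermitian_conjTranspose_mul_mul B⁻¹ hS) (conjTranspose_inv_mul_mul_inv_mul_self_eq_one hB h)
  have hWW : W * Wᴴ = 1 := mem_unitaryGroup_iff.mp hW
  have hdet : IsUnit B.det := (isUnit_iff_isUnit_det B).mp hB
  have hdetH : IsUnit Bᴴ.det := det_conjTranspose B ▸ hdet.star
  refine ⟨k, hk, Wᴴ * B, (IsUnit.of_mul_eq_one_right W hWW).mul hB, ?_, ?_⟩
  · rw [conjTranspose_mul, conjTranspose_conjTranspose, Matrix.mul_assoc,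
      ← Matrix.mul_assoc W, hWW, Matrix.one_mul]
  · calc S = Bᴴ * ((B⁻¹)ᴴ * S * B⁻¹) * B := by
          rw [conjTranspose_nonsing_inv, Matrix.mul_assoc (Bᴴ)⁻¹,
            mul_nonsing_inv_cancel_left _ _ hdetH, nonsing_inv_mul_cancel_right _ _ hdet]
      _ = (Wᴴ * B)ᴴ * signatureMatrix n k * (Wᴴ * B) := by
          rw [hM, conjTranspose_mul, conjTranspose_conjTranspose]
          simp only [Matrix.mul_assoc]

section Topology

variable {X : Type*} [TopologicalSpace X]

theorem continuous_matrix_inv {ι K : Type*} [Fintype ι] [DecidableEq ι] [Field K]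
    [TopologicalSpace K] [IsTopologicalRing K] [ContinuousInv₀ K] {A : X → Matrix ι ι K}
    (hA : Continuous A) (hinv : ∀ x, IsUnit (A x)) : Continuous fun x => (A x)⁻¹ := by
  refine continuous_iff_continuousAt.mpr fun x => ?_
  refine ContinuousAt.comp (continuousAt_matrix_inv (A x) ?_) hA.continuousAt
  rw [Ring.inverse_eq_inv']
  exact continuousAt_inv₀ ((isUnit_iff_isUnit_det _).mp (hinv x)).ne_zero

theorem exists_constant_signature_congruence_general [PreconnectedSpace X] {n : ℕ}
    {S Q : X → Matrix (Fin n) (Fin n) ℂ} (hScont : Continuous S)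
    (hSherm : ∀ x, (S x).IsHermitian) (hQcont : Continuous Q) (hQpos : ∀ x, (Q x).PosDef)
    (hcompat : ∀ x, Q x = S x * (Q x)⁻¹ * S x) :
    ∃ k : ℕ, k ≤ n ∧ ∀ x, ∃ T : Matrix (Fin n) (Fin n) ℂ, IsUnit T ∧
      Q x = Tᴴ * T ∧ S x = Tᴴ * signatureMatrix n k * T := by
  choose k hkn T hT hQT hST using fun x =>
    exists_signature_congruence (hSherm x) (hQpos x) (hcompat x)
  have htrace (x : X) : (S x * (Q x)⁻¹).trace = ((2 * k x - n : ℤ) : ℂ) := by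
    rw [hST x, hQT x, trace_conjTranspose_mul_mul_mul_inv (hT x), trace_signatureMatrix (hkn x)]
    norm_cast
  have htrace_cont : Continuous fun x => (2 * k x - n : ℤ) := by
    rw [Complex.isClosedEmbedding_intCast.continuous_iff]
    simpa only [Function.comp_def, htrace] using
      (hScont.matrix_mul (continuous_matrix_inv hQcont fun x => (hQpos x).isUnit)).matrix_trace
  have hk (x y : X) : k x = k y := by
    have htrace_eq : (2 * k x - n : ℤ) = 2 * k y - n :=
      PreconnectedSpace.constant inferInstance htrace_cont
    omega
  rcases isEmpty_or_nonempty X with _ | ⟨⟨x₀⟩⟩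
  · exact ⟨0, n.zero_le, isEmptyElim⟩
  · exact ⟨k x₀, hkn x₀, fun x => ⟨T x, hT x, hQT x, hk x x₀ ▸ hST x⟩⟩

end Topology

/-- **Statement 12.** If `Ŝ` is a continuous family of Hermitian invertible matrices and
`Q̂` a continuous family of Hermitian positive definite matrices with
`Q̂(ω) = Ŝ(ω)·Q̂(ω)⁻¹·Ŝ(ω)` for all `ω`, then there are `k ≤ n` and pointwise invertible
matrices `T̂(ω)` such that, with the constant signature matrix `D = diag(I_k, −I_{n−k})`,
`Q̂(ω) = T̂(ω)ᴴ·T̂(ω)` and `Ŝ(ω) = T̂(ω)ᴴ·D·T̂(ω)` for every `ω`. -/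
theorem exists_constant_signature_congruence
    (s n : ℕ) (hs : 0 < s) (hn : 0 < n)
    (S : EuclideanSpace ℝ (Fin s) → Matrix (Fin n) (Fin n) ℂ)
    (hScont : Continuous S)
    (hSherm : ∀ ω, (S ω).IsHermitian) (hSinv : ∀ ω, IsUnit (S ω))
    (Q : EuclideanSpace ℝ (Fin s) → Matrix (Fin n) (Fin n) ℂ)
    (hQcont : Continuous Q)
    (hQpos : ∀ ω, (Q ω).PosDef)
    (hcompat : ∀ ω, Q ω = S ω * (Q ω)⁻¹ * S ω) :
    ∃ k : ℕ, k ≤ n ∧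
      ∀ ω : EuclideanSpace ℝ (Fin s),
        ∃ T : Matrix (Fin n) (Fin n) ℂ, IsUnit T ∧
          Q ω = Tᴴ * T ∧ S ω = Tᴴ * signatureMatrix n k * T :=
  exists_constant_signature_congruence_general hScont hSherm hQcont hQpos hcompat
end

section
/- For every ω ∈ ℝ and every s ∈ ℂ with Re(s) > 0, the polynomial value s⁴ + (2ω² + 1)·s² + ω⁴ is nonzero, and the Timoshenko transfer function Ĝ(s, ω) = (s³ + (ω² + 1)·s) / (s⁴ + (2ω² + 1)·s² + ω⁴) satisfies Re(Ĝ(s, ω)) ≥ 0. That is, for each fixed ω ∈ ℝ, the rational function s ↦ Ĝ(s, ω) is positive real. -/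
/-!
The reciprocal of the transfer function is the continued fraction
`s + ω² / (s + 1 / (s + ω² / s))`. The open right half-plane is stable under inversion, and adding
to one of its points a nonnegative multiple of another stays inside, so it contains every tail of
this fraction, and hence the transfer function itself.
-/

section RightHalfPlane

open RCLike

variable {𝕜 : Type*} [RCLike 𝕜] {s p q z : 𝕜} {a b c : ℝ}

lemma re_inv_pos (hz : 0 < re z) : 0 < re z⁻¹ := by
  rw [inv_re]
  exact div_pos hz (normSq_pos.mpr (ne_zero_of_map hz.ne'))

lemma numerator_ne_zero_of_re_div_pos (hpq : 0 < re (p / q)) : p ≠ 0 :=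
  (div_ne_zero_iff.mp (ne_zero_of_map hpq.ne')).1

/-- One step of a continued fraction: `(s * p + c * q) / p = s + c / (p / q)`. -/
lemma re_mul_add_mul_div_pos (hs : 0 < re s) (hc : 0 ≤ c) (hpq : 0 < re (p / q)) :
    0 < re ((s * p + c * q) / p) := by
  have hp : p ≠ 0 := numerator_ne_zero_of_re_div_pos hpq
  have hqp : 0 < re (q / p) := inv_div p q ▸ re_inv_pos hpq
  calc 0 < re s + c * re (q / p) := add_pos_of_pos_of_nonneg hs (mul_nonneg hc hqp.le)
    _ = re (s + c * (q / p)) := by rw [map_add, re_ofReal_mul]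
    _ = re ((s * p + c * q) / p) := by rw [add_div, mul_div_cancel_right₀ s hp, mul_div_assoc]

lemma re_quartic_div_cubic_pos (ha : 0 ≤ a) (hb : 0 ≤ b) (hc : 0 ≤ c) (hs : 0 < re s) :
    0 < re ((s ^ 4 + (a + b + c) * s ^ 2 + a * c) / (s ^ 3 + (b + c) * s)) := by
  have h_linear : 0 < re (s / 1) := by rwa [div_one]
  have h_quadratic : 0 < re ((s ^ 2 + c) / s) := by
    convert re_mul_add_mul_div_pos hs hc h_linear using 3
    ring
  have h_cubic : 0 < re ((s ^ 3 + (b + c) * s) / (s ^ 2 + c)) := by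
    convert re_mul_add_mul_div_pos hs hb h_quadratic using 3
    ring
  convert re_mul_add_mul_div_pos hs ha h_cubic using 3
  ring

/-- The Timoshenko beam is the case `a = c = ω ^ 2`, `b = 1`. -/
theorem timoshenko_transfer_function_positive_real_general
    (ha : 0 ≤ a) (hb : 0 ≤ b) (hc : 0 ≤ c) (hs : 0 < re s) :
    s ^ 4 + (a + b + c) * s ^ 2 + a * c ≠ 0 ∧
      0 < re ((s ^ 3 + (b + c) * s) / (s ^ 4 + (a + b + c) * s ^ 2 + a * c)) := by
  have h_recip := re_quartic_div_cubic_pos ha hb hc hs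
  exact ⟨numerator_ne_zero_of_re_div_pos h_recip, inv_div (_ : 𝕜) _ ▸ re_inv_pos h_recip⟩

end RightHalfPlane

/-- **Statement 17.** For every `ω ∈ ℝ` and `s ∈ ℂ` with `Re s > 0`, the denominator
`s⁴ + (2ω² + 1)s² + ω⁴` is nonzero and the Timoshenko transfer function
`Ĝ(s, ω) = (s³ + (ω² + 1)s) / (s⁴ + (2ω² + 1)s² + ω⁴)` has nonnegative real part; that
is, for each fixed `ω` the rational function `s ↦ Ĝ(s, ω)` is positive real. -/
theorem timoshenko_transfer_function_positive_real :
    ∀ (ω : ℝ) (s : ℂ), 0 < s.re →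
      s ^ 4 + (2 * (ω : ℂ) ^ 2 + 1) * s ^ 2 + (ω : ℂ) ^ 4 ≠ 0 ∧
      0 ≤ ((s ^ 3 + ((ω : ℂ) ^ 2 + 1) * s) /
        (s ^ 4 + (2 * (ω : ℂ) ^ 2 + 1) * s ^ 2 + (ω : ℂ) ^ 4)).re := by
  intro ω s hs
  have numerator_coeff : (ω : ℂ) ^ 2 + 1 = 1 + ω ^ 2 := add_comm _ _
  have denominator_coeff : 2 * (ω : ℂ) ^ 2 + 1 = ω ^ 2 + 1 + ω ^ 2 := by ring
  have denominator_const : (ω : ℂ) ^ 4 = ω ^ 2 * ω ^ 2 := by ring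
  rw [numerator_coeff, denominator_coeff, denominator_const]
  exact_mod_cast (timoshenko_transfer_function_positive_real_general (𝕜 := ℂ)
    (sq_nonneg ω) zero_le_one (sq_nonneg ω) hs).imp_right le_of_lt
end

section
/- For ω ∈ ℝ, define Â(ω) = [[0,0,1,0],[0,0,0,1],[−ω², iω, 0, 0],[−iω, −ω²−1, 0, 0]] ∈ ℂ^{4×4}, B̂(ω) = (0,0,1,0)ᵀ ∈ ℂ^{4×1}, and Ĉ(ω) = (0,0,1,0) ∈ ℂ^{1×4}. Then: (i) for every ω ≠ 0, the controllability matrix [B̂(ω), Â(ω)·B̂(ω), Â(ω)²·B̂(ω), Â(ω)³·B̂(ω)] ∈ ℂ^{4×4} has rank 4 and the observability matrix with rows Ĉ(ω), Ĉ(ω)·Â(ω), Ĉ(ω)·Â(ω)², Ĉ(ω)·Â(ω)³ has rank 4; (ii) for ω = 0, both matrices have rank strictly less than 4. -/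
/-! The beam is a pair of coupled oscillators `q'' = N q + b u`, so its state matrix
`[[0, 1], [N, 0]]` swaps positions and velocities. Even powers of such a matrix keep an input vector
among the velocities and odd powers move it to the positions; hence the controllability matrix
splits into blocks that only involve the controllability matrix `[b, N b]` of the `2 × 2` matrix
`N`. With `b = (1, 0)` its determinant is the coupling coefficient `N₁₀ = -iω`. Observability is
controllability of the transposed system, whose coupling coefficient is `N₀₁ = iω`; there one of the
two blocks carries an additional factor `Nᵀ`, which is harmless because `det N = ω⁴`. -/

open Matrix

/-- The Timoshenko-beam frequency-domain state matrix `Â(ω)`. -/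
noncomputable def timA (ω : ℝ) : Matrix (Fin 4) (Fin 4) ℂ :=
  !![0, 0, 1, 0;
     0, 0, 0, 1;
     -(ω : ℂ) ^ 2, Complex.I * ω, 0, 0;
     -(Complex.I * ω), -(ω : ℂ) ^ 2 - 1, 0, 0]

/-- The Timoshenko-beam input matrix `B̂(ω)`. -/
noncomputable def timB (ω : ℝ) : Matrix (Fin 4) (Fin 1) ℂ := !![0; 0; 1; 0]

/-- The Timoshenko-beam output matrix `Ĉ(ω)`. -/
noncomputable def timC (ω : ℝ) : Matrix (Fin 1) (Fin 4) ℂ := !![0, 0, 1, 0]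

/-- The controllability matrix `[B̂(ω), Â(ω)B̂(ω), Â(ω)²B̂(ω), Â(ω)³B̂(ω)]` of the
Timoshenko beam, as a `4 × 4` matrix. -/
noncomputable def timCtrb (ω : ℝ) : Matrix (Fin 4) (Fin 4) ℂ :=
  Matrix.of fun i j => (timA ω ^ (j : ℕ) * timB ω) i 0

/-- The observability matrix with rows `Ĉ(ω), Ĉ(ω)Â(ω), Ĉ(ω)Â(ω)², Ĉ(ω)Â(ω)³` of the
Timoshenko beam, as a `4 × 4` matrix. -/
noncomputable def timObsv (ω : ℝ) : Matrix (Fin 4) (Fin 4) ℂ :=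
  Matrix.of fun i j => (timC ω * timA ω ^ (i : ℕ)) 0 j

section Rank

theorem finrank_submodule_prod {R V W : Type*} [Ring R] [StrongRankCondition R]
    [AddCommGroup V] [Module R V] [AddCommGroup W] [Module R W]
    (p : Submodule R V) (q : Submodule R W) [Module.Free R p] [Module.Finite R p]
    [Module.Free R q] [Module.Finite R q] :
    Module.finrank R (p.prod q) = Module.finrank R p + Module.finrank R q := by
  have range_eq : p.prod q = (p.subtype.prodMap q.subtype).range := by
    rw [LinearMap.range_prodMap, Submodule.range_subtype, Submodule.range_subtype]
  rw [range_eq, LinearMap.finrank_range_of_inj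
    (p.subtype_injective.prodMap q.subtype_injective), Module.finrank_prod]

variable {K : Type*} [Field K]

theorem rank_fromBlocks_diagonal {m n o p : Type*} [Finite m] [Finite n] [Fintype o] [Fintype p]
    (A : Matrix m o K) (D : Matrix n p K) : (fromBlocks A 0 0 D).rank = A.rank + D.rank := by
  have mulVecLin_eq : (fromBlocks A 0 0 D).mulVecLin =
      (LinearEquiv.sumArrowLequivProdArrow m n K K).symm.toLinearMap ∘ₗ
        A.mulVecLin.prodMap D.mulVecLin ∘ₗ
          (LinearEquiv.sumArrowLequivProdArrow o p K K).toLinearMap := by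
    refine LinearMap.ext fun v => funext fun i => ?_
    cases i <;>
      simp only [mulVecBilin_apply, fromBlocks_mulVec, zero_mulVec, add_zero, zero_add,
        Sum.elim_inl, Sum.elim_inr, LinearMap.coe_comp, LinearEquiv.coe_coe, Function.comp_apply,
        LinearMap.prodMap_apply, LinearEquiv.sumArrowLequivProdArrow_symm_apply_inl,
        LinearEquiv.sumArrowLequivProdArrow_symm_apply_inr] <;>
      rfl
  rw [rank, mulVecLin_eq, LinearMap.range_comp, LinearEquiv.finrank_map_eq,
    LinearMap.range_comp_of_range_eq_top _ (LinearEquiv.range _), LinearMap.range_prodMap,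
    finrank_submodule_prod, rank, rank]

theorem rank_eq_card_iff_det_ne_zero {n : Type*} [Fintype n] [DecidableEq n] {A : Matrix n n K} :
    A.rank = Fintype.card n ↔ A.det ≠ 0 := by
  rw [← isUnit_iff_ne_zero, ← isUnit_iff_isUnit_det, ← linearIndependent_cols_iff_isUnit,
    linearIndependent_iff_card_eq_finrank_span, rank_eq_finrank_span_cols, eq_comm, Set.finrank]

end Rank

/-- The matrix `[b, A b, …, A ^ (k - 1) b]` deciding controllability of the single-input system
`x' = A x + b u`. Applied to `Aᵀ` and the output vector it is the transpose of the observability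
matrix. -/
def controllabilityMatrix {R n : Type*} [Semiring R] [Fintype n] [DecidableEq n]
    (A : Matrix n n R) (b : n → R) (k : ℕ) : Matrix n (Fin k) R :=
  of fun i j => (A ^ (j : ℕ) *ᵥ b) i

section Controllability

variable {R m n : Type*} [Fintype m] [DecidableEq m] [Fintype n] [DecidableEq n]

theorem submatrix_equiv_pow [Semiring R] (A : Matrix n n R) (e : m ≃ n) (k : ℕ) :
    A.submatrix e e ^ k = (A ^ k).submatrix e e :=
  (map_pow (reindexRingEquiv R e.symm) A k).symm

theorem controllabilityMatrix_submatrix_equiv [Semiring R] (A : Matrix n n R) (b : n → R)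
    (e : m ≃ n) (k : ℕ) :
    controllabilityMatrix (A.submatrix e e) (b ∘ e) k =
      (controllabilityMatrix A b k).submatrix e id := by
  ext i j
  simp [controllabilityMatrix, submatrix_equiv_pow, submatrix_mulVec_equiv, Function.comp_assoc]

theorem rank_controllabilityMatrix_submatrix_equiv [CommSemiring R] (A : Matrix n n R) (b : n → R)
    (e : m ≃ n) (k : ℕ) :
    (controllabilityMatrix (A.submatrix e e) (b ∘ e) k).rank =
      (controllabilityMatrix A b k).rank := by
  rw [controllabilityMatrix_submatrix_equiv]
  exact rank_submatrix _ e (Equiv.refl _)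

theorem det_controllabilityMatrix_fin_two [CommRing R] (A : Matrix (Fin 2) (Fin 2) R) :
    (controllabilityMatrix A ![1, 0] 2).det = A 1 0 := by
  simp [controllabilityMatrix, det_fin_two, mulVec, dotProduct]

theorem rank_controllabilityMatrix_fin_two_eq_two_iff [Field R] {A : Matrix (Fin 2) (Fin 2) R} :
    (controllabilityMatrix A ![1, 0] 2).rank = 2 ↔ A 1 0 ≠ 0 := by
  rw [← det_controllabilityMatrix_fin_two A, ← rank_eq_card_iff_det_ne_zero, Fintype.card_fin]

theorem fromBlocks_antidiagonal_pow_even [Semiring R] (P : Matrix m n R) (Q : Matrix n m R)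
    (k : ℕ) : fromBlocks 0 P Q 0 ^ (2 * k) = fromBlocks ((P * Q) ^ k) 0 0 ((Q * P) ^ k) := by
  rw [pow_mul, sq, fromBlocks_multiply]
  simp [fromBlocks_diagonal_pow]

theorem fromBlocks_antidiagonal_pow_even_mulVec [Semiring R] (P : Matrix m n R) (Q : Matrix n m R)
    (b : n → R) (k : ℕ) :
    fromBlocks 0 P Q 0 ^ (2 * k) *ᵥ Sum.elim (0 : m → R) b =
      Sum.elim (0 : m → R) ((Q * P) ^ k *ᵥ b) := by
  simp [fromBlocks_antidiagonal_pow_even, fromBlocks_mulVec]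

theorem fromBlocks_antidiagonal_pow_odd_mulVec [Semiring R] (P : Matrix m n R) (Q : Matrix n m R)
    (b : n → R) (k : ℕ) :
    fromBlocks 0 P Q 0 ^ (2 * k + 1) *ᵥ Sum.elim (0 : m → R) b =
      Sum.elim (P *ᵥ (Q * P) ^ k *ᵥ b) (0 : n → R) := by
  rw [pow_succ', ← mulVec_mulVec, fromBlocks_antidiagonal_pow_even_mulVec]
  simp [fromBlocks_mulVec]

/-- The splitting of `Fin (k * 2)` by parity: `inl j` stands for `2 * j + 1` and `inr j` for
`2 * j`. -/
def oddSumEvenEquiv (k : ℕ) : Fin k ⊕ Fin k ≃ Fin (k * 2) :=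
  (Equiv.sumComm _ _).trans <| (Equiv.boolProdEquivSum _).symm.trans <|
    (Equiv.prodComm _ _).trans <| (Equiv.prodCongr (Equiv.refl _) finTwoEquiv.symm).trans
      finProdFinEquiv

theorem oddSumEvenEquiv_inl (k : ℕ) (j : Fin k) :
    (oddSumEvenEquiv k (Sum.inl j) : ℕ) = 2 * j + 1 := by
  simp [oddSumEvenEquiv, finTwoEquiv, add_comm]

theorem oddSumEvenEquiv_inr (k : ℕ) (j : Fin k) :
    (oddSumEvenEquiv k (Sum.inr j) : ℕ) = 2 * j := by
  simp [oddSumEvenEquiv, finTwoEquiv]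

theorem controllabilityMatrix_fromBlocks_antidiagonal [Semiring R] (P : Matrix m n R)
    (Q : Matrix n m R) (b : n → R) (k : ℕ) :
    (controllabilityMatrix (fromBlocks 0 P Q 0) (Sum.elim (0 : m → R) b) (k * 2)).submatrix id
        (oddSumEvenEquiv k) =
      fromBlocks (P * controllabilityMatrix (Q * P) b k) 0 0
        (controllabilityMatrix (Q * P) b k) := by
  ext i (j | j)
  · have odd_column : (P * controllabilityMatrix (Q * P) b k).col j =
        P *ᵥ (Q * P) ^ (j : ℕ) *ᵥ b := rfl
    cases i <;>
      simp [controllabilityMatrix, oddSumEvenEquiv_inl, fromBlocks_antidiagonal_pow_odd_mulVec,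
        -mulVec_mulVec, ← odd_column]
  · cases i <;>
      simp [controllabilityMatrix, oddSumEvenEquiv_inr, fromBlocks_antidiagonal_pow_even_mulVec]

theorem rank_controllabilityMatrix_fromBlocks_antidiagonal [Field R] (P : Matrix m n R)
    (Q : Matrix n m R) (b : n → R) (k : ℕ) :
    (controllabilityMatrix (fromBlocks 0 P Q 0) (Sum.elim (0 : m → R) b) (k * 2)).rank =
      (P * controllabilityMatrix (Q * P) b k).rank + (controllabilityMatrix (Q * P) b k).rank := by
  rw [← rank_fromBlocks_diagonal, ← controllabilityMatrix_fromBlocks_antidiagonal]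
  exact (rank_submatrix _ (Equiv.refl _) _).symm

end Controllability

/-- The matrix `N(ω)` of the beam written as the second-order system `q'' = N(ω) q + b u`, where
`q` collects displacement and rotation. -/
noncomputable def timN (ω : ℝ) : Matrix (Fin 2) (Fin 2) ℂ :=
  !![-(ω : ℂ) ^ 2, Complex.I * ω; -(Complex.I * ω), -(ω : ℂ) ^ 2 - 1]

theorem det_timN (ω : ℝ) : (timN ω).det = (ω : ℂ) ^ 4 := by
  rw [timN, det_fin_two_of]
  linear_combination (ω : ℂ) ^ 2 * Complex.I_sq

theorem timA_eq_submatrix_fromBlocks (ω : ℝ) :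
    timA ω = (fromBlocks 0 1 (timN ω) 0).submatrix (finSumFinEquiv (m := 2) (n := 2)).symm
      (finSumFinEquiv (m := 2) (n := 2)).symm := by
  rw [← reindex_apply, ← Equiv.symm_apply_eq, reindex_symm, reindex_apply]
  ext (i | i) (j | j) <;> fin_cases i <;> fin_cases j <;> simp [timA, timN, finSumFinEquiv]

theorem velocity_input_eq_sumElim_comp :
    (![0, 0, 1, 0] : Fin 4 → ℂ) =
      Sum.elim (0 : Fin 2 → ℂ) ![1, 0] ∘ (finSumFinEquiv (m := 2) (n := 2)).symm := by
  ext i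
  fin_cases i <;> rfl

theorem timCtrb_eq_controllabilityMatrix (ω : ℝ) :
    timCtrb ω = controllabilityMatrix (timA ω) ![0, 0, 1, 0] 4 := by
  ext i j
  simp [timCtrb, controllabilityMatrix, timB, mul_apply, mulVec, dotProduct, Fin.sum_univ_four]

theorem timObsv_eq_transpose_controllabilityMatrix (ω : ℝ) :
    timObsv ω = (controllabilityMatrix (timA ω)ᵀ ![0, 0, 1, 0] 4)ᵀ := by
  ext i j
  rw [transpose_apply, controllabilityMatrix, of_apply, ← transpose_pow, mulVec_transpose]
  simp [timObsv, timC, mul_apply, vecMul, dotProduct, Fin.sum_univ_four]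

theorem rank_timCtrb (ω : ℝ) :
    (timCtrb ω).rank = 2 * (controllabilityMatrix (timN ω) ![1, 0] 2).rank := by
  rw [timCtrb_eq_controllabilityMatrix, timA_eq_submatrix_fromBlocks,
    velocity_input_eq_sumElim_comp, rank_controllabilityMatrix_submatrix_equiv,
    rank_controllabilityMatrix_fromBlocks_antidiagonal 1 (timN ω) _ 2, Matrix.mul_one,
    Matrix.one_mul, two_mul]

theorem rank_timObsv (ω : ℝ) :
    (timObsv ω).rank = ((timN ω)ᵀ * controllabilityMatrix (timN ω)ᵀ ![1, 0] 2).rank +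
      (controllabilityMatrix (timN ω)ᵀ ![1, 0] 2).rank := by
  rw [timObsv_eq_transpose_controllabilityMatrix, rank_transpose, timA_eq_submatrix_fromBlocks,
    transpose_submatrix, fromBlocks_transpose, transpose_zero, transpose_one,
    velocity_input_eq_sumElim_comp, rank_controllabilityMatrix_submatrix_equiv,
    rank_controllabilityMatrix_fromBlocks_antidiagonal (timN ω)ᵀ 1 _ 2, Matrix.one_mul]

theorem rank_timCtrb_eq_four_iff {ω : ℝ} : (timCtrb ω).rank = 4 ↔ ω ≠ 0 := by
  have coupling : timN ω 1 0 ≠ 0 ↔ ω ≠ 0 := by simp [timN]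
  rw [rank_timCtrb, ← coupling, ← rank_controllabilityMatrix_fin_two_eq_two_iff]
  lia

theorem rank_timObsv_eq_four_iff {ω : ℝ} : (timObsv ω).rank = 4 ↔ ω ≠ 0 := by
  have coupling : (timN ω)ᵀ 1 0 ≠ 0 ↔ ω ≠ 0 := by simp [timN]
  rw [rank_timObsv]
  constructor
  · intro rank_add_rank
    have rank_mul_le := rank_mul_le_right (timN ω)ᵀ (controllabilityMatrix (timN ω)ᵀ ![1, 0] 2)
    have rank_le_two := rank_le_width (controllabilityMatrix (timN ω)ᵀ ![1, 0] 2)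
    exact coupling.1 (rank_controllabilityMatrix_fin_two_eq_two_iff.1 (by lia))
  · intro hω
    have det_ne_zero : (timN ω)ᵀ.det ≠ 0 := by
      rw [det_transpose, det_timN]
      exact pow_ne_zero 4 (Complex.ofReal_ne_zero.2 hω)
    rw [rank_mul_eq_right_of_det_ne_zero _ _ det_ne_zero,
      rank_controllabilityMatrix_fin_two_eq_two_iff.2 (coupling.2 hω)]

/-- **Statement 18.** The Timoshenko frequency-domain system is controllable and
observable for every `ω ≠ 0`, but neither controllable nor observable for `ω = 0`. -/
theorem timoshenko_minimal_iff_nonzero_frequency :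
    (∀ ω : ℝ, ω ≠ 0 → (timCtrb ω).rank = 4 ∧ (timObsv ω).rank = 4) ∧
      (timCtrb 0).rank < 4 ∧ (timObsv 0).rank < 4 := by
  refine ⟨fun ω hω => ⟨rank_timCtrb_eq_four_iff.2 hω, rank_timObsv_eq_four_iff.2 hω⟩, ?_, ?_⟩
  · exact (rank_le_width _).lt_of_ne fun h => rank_timCtrb_eq_four_iff.1 h rfl
  · exact (rank_le_width _).lt_of_ne fun h => rank_timObsv_eq_four_iff.1 h rfl
end
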